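/- arXiv:2407.03973 — 7 statements merged into one kernel-verified Lean document; each statement's English description precedes it below -/
import Mathlib

section
/- Let R be a commutative ring and c, d ∈ R. The fundamental sequence 0 → ann(c·d)/M → (ann(c)/(ann(c)·(d))) ⊕ (ann(d)/((c)·ann(d))) → H → ((c) ∩ (d))/(c·d) → 0 is exact, where the maps are α([r]) = ([d·r], [c·r]), β([f], [g]) = [f, g] ∈ H, and γ([f, g]) = [c·f] (which equals [d·g]). -/
open Submodule

section Core
variable (R : Type*) [CommRing R]

/-- The annihilator ideal of an element `c`: `{r : R | c * r = 0}`. -/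
def annI (c : R) : Ideal R := LinearMap.ker (LinearMap.lsmul R R c)

lemma mem_annI {R : Type*} [CommRing R] {c r : R} : r ∈ annI R c ↔ c * r = 0 := Iff.rfl

/-- `Z = {(f, g) | c * f = d * g}`. -/
def Zsub (c d : R) : Submodule R (R × R) where
  carrier := {p | c * p.1 = d * p.2}
  add_mem' := by
    rintro ⟨a1, a2⟩ ⟨b1, b2⟩ ha hb
    simp only [Set.mem_setOf_eq] at *
    simp [mul_add, ha, hb]
  zero_mem' := by simp
  smul_mem' := by
    rintro r ⟨p1, p2⟩ hp
    simp only [Set.mem_setOf_eq, Prod.smul_fst, Prod.smul_snd, smul_eq_mul] at *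
    rw [mul_left_comm, hp, mul_left_comm]

lemma mem_Zsub {R : Type*} [CommRing R] {c d f g : R} :
    (f, g) ∈ Zsub R c d ↔ c * f = d * g := Iff.rfl

/-- `B = {(d * r, c * r) | r ∈ R}`. -/
def Bsub (c d : R) : Submodule R (R × R) :=
  LinearMap.range ((LinearMap.lsmul R R d).prod (LinearMap.lsmul R R c))

/-- The homology `H = Z / B`. -/
abbrev Hmod (c d : R) := Zsub R c d ⧸ (Bsub R c d).comap (Zsub R c d).subtype

/-- The class `[f, g] ∈ H` of a pair `(f, g)` with `c * f = d * g`. -/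
def Hmk (c d : R) (f g : R) (h : c * f = d * g) : Hmod R c d :=
  Submodule.Quotient.mk ⟨(f, g), h⟩

/-- The submodule of `H` generated by horizontally pure classes `[f, 0]`. -/
def Hpureh (c d : R) : Submodule R (Hmod R c d) :=
  span R {h | ∃ f, ∃ hf : c * f = d * 0, h = Hmk R c d f 0 hf}

/-- The submodule of `H` generated by vertically pure classes `[0, g]`. -/
def Hpurev (c d : R) : Submodule R (Hmod R c d) :=
  span R {h | ∃ g, ∃ hg : c * 0 = d * g, h = Hmk R c d 0 g hg}

/-- The ideal `M = {r ∈ ann(cd) | ∃ f ∈ ann(c), g ∈ ann(d), rd = fd ∧ rc = gc}`. -/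
def Msub (c d : R) : Ideal R where
  carrier := {r | r ∈ annI R (c * d) ∧
    ∃ f ∈ annI R c, ∃ g ∈ annI R d, r * d = f * d ∧ r * c = g * c}
  zero_mem' := ⟨zero_mem _, 0, zero_mem _, 0, zero_mem _, by simp, by simp⟩
  add_mem' := by
    rintro a b ⟨ha, f, hf, g, hg, hfd, hgc⟩ ⟨hb, f', hf', g', hg', hfd', hgc'⟩
    exact ⟨add_mem ha hb, f + f', add_mem hf hf', g + g', add_mem hg hg',
      by rw [add_mul, add_mul, hfd, hfd'], by rw [add_mul, add_mul, hgc, hgc']⟩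
  smul_mem' := by
    rintro s a ⟨ha, f, hf, g, hg, hfd, hgc⟩
    refine ⟨Submodule.smul_mem _ s ha, s * f, ?_, s * g, ?_, ?_, ?_⟩
    · simpa [smul_eq_mul] using Submodule.smul_mem _ s hf
    · simpa [smul_eq_mul] using Submodule.smul_mem _ s hg
    · show (s * a) * d = (s * f) * d
      rw [mul_assoc, hfd, mul_assoc]
    · show (s * a) * c = (s * g) * c
      rw [mul_assoc, hgc, mul_assoc]

lemma mem_Msub {R : Type*} [CommRing R] {c d r : R} :
    r ∈ Msub R c d ↔ r ∈ annI R (c * d) ∧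
      ∃ f ∈ annI R c, ∃ g ∈ annI R d, r * d = f * d ∧ r * c = g * c := Iff.rfl

end Core

section Helpers
variable {R : Type*} [CommRing R]

lemma dr_mem_annI {c d r : R} (hr : r ∈ annI R (c * d)) : d * r ∈ annI R c := by
  rw [mem_annI] at *
  rw [← mul_assoc]; exact hr

lemma cr_mem_annI {c d r : R} (hr : r ∈ annI R (c * d)) : c * r ∈ annI R d := by
  rw [mem_annI] at *
  calc d * (c * r) = c * d * r := by ring
  _ = 0 := hr

lemma ann_pair_Z {c d f g : R} (hf : f ∈ annI R c) (hg : g ∈ annI R d) :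
    c * f = d * g := by
  rw [mem_annI] at hf hg; rw [hf, hg]

lemma cf_mem_inf {c d f g : R} (h : c * f = d * g) :
    c * f ∈ Ideal.span {c} ⊓ Ideal.span {d} := by
  refine Submodule.mem_inf.mpr ⟨?_, ?_⟩
  · exact Ideal.mem_span_singleton.mpr ⟨f, rfl⟩
  · exact Ideal.mem_span_singleton.mpr ⟨g, h⟩

lemma rc_mem_inf_ann {c d r : R} (hr : r ∈ annI R (c * d)) :
    r * c ∈ Ideal.span {c} ⊓ annI R d := by
  rw [mem_annI] at hr
  refine Submodule.mem_inf.mpr ⟨Ideal.mem_span_singleton.mpr ⟨r, mul_comm r c⟩, ?_⟩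
  rw [mem_annI]
  calc d * (r * c) = c * d * r := by ring
  _ = 0 := hr

lemma rd_mem_ann_inf {c d r : R} (hr : r ∈ annI R (c * d)) :
    r * d ∈ annI R c ⊓ Ideal.span {d} := by
  rw [mem_annI] at hr
  refine Submodule.mem_inf.mpr ⟨?_, Ideal.mem_span_singleton.mpr ⟨r, mul_comm r d⟩⟩
  rw [mem_annI]
  calc c * (r * d) = c * d * r := by ring
  _ = 0 := hr

lemma HmkPQ {c d P Q : R} (hP : annI R c = Ideal.span {P}) (hQ : annI R d = Ideal.span {Q})
    (f g : R) : c * (f * P) = d * (g * Q) := by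
  have hp : c * P = 0 := by
    rw [← mem_annI (R := R)]
    rw [hP]
    exact Ideal.mem_span_singleton_self P
  have hq : d * Q = 0 := by
    rw [← mem_annI (R := R)]
    rw [hQ]
    exact Ideal.mem_span_singleton_self Q
  calc c * (f * P) = f * (c * P) := by ring
  _ = 0 := by rw [hp, mul_zero]
  _ = g * (d * Q) := by rw [hq, mul_zero]
  _ = d * (g * Q) := by ring

end Helpers

section QuotTypes
variable (R : Type*) [CommRing R]

/-- `ann(cd)/M`. -/
abbrev Tcd (c d : R) :=
  ↥(annI R (c * d)) ⧸ Submodule.comap (annI R (c * d)).subtype (Msub R c d)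

/-- `ann(c)/(ann(c)·(d))`. -/
abbrev Th (c d : R) :=
  ↥(annI R c) ⧸ Submodule.comap (annI R c).subtype (annI R c * Ideal.span {d})

/-- `ann(d)/((c)·ann(d))`. -/
abbrev Tv (c d : R) :=
  ↥(annI R d) ⧸ Submodule.comap (annI R d).subtype (Ideal.span {c} * annI R d)

/-- `((c) ∩ (d))/(cd)`. -/
abbrev T4 (c d : R) :=
  ↥(Ideal.span {c} ⊓ Ideal.span {d}) ⧸
    Submodule.comap (Ideal.span {c} ⊓ Ideal.span {d}).subtype (Ideal.span {c * d})

/-- `((c) ∩ ann(d))/((c)·ann(d))`. -/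
abbrev Tc' (c d : R) :=
  ↥(Ideal.span {c} ⊓ annI R d) ⧸
    Submodule.comap (Ideal.span {c} ⊓ annI R d).subtype (Ideal.span {c} * annI R d)

/-- `(ann(c) ∩ (d))/(ann(c)·(d))`. -/
abbrev Td' (c d : R) :=
  ↥(annI R c ⊓ Ideal.span {d}) ⧸
    Submodule.comap (annI R c ⊓ Ideal.span {d}).subtype (annI R c * Ideal.span {d})

/-- `φ : Z → R`, `(f, g) ↦ c·f`. -/
def phiZ (c d : R) : Zsub R c d →ₗ[R] R :=
  LinearMap.lsmul R R c ∘ₗ (LinearMap.fst R R R ∘ₗ (Zsub R c d).subtype)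

end QuotTypes

variable {R : Type*} [CommRing R]

/-- The class `[f, g] ∈ H` vanishes exactly when `(f, g) = (d * r, c * r)` for some `r`. -/
lemma Hmk_eq_zero_iff {c d f g : R} (h : c * f = d * g) :
    Hmk R c d f g h = 0 ↔ ∃ r, d * r = f ∧ c * r = g := by
  rw [Hmk, Submodule.Quotient.mk_eq_zero]
  simp [Bsub]

/-- `[r] ↦ ([d * r], [c * r])`. -/
def fundAlpha (c d : R) : Tcd R c d →ₗ[R] Th R c d × Tv R c d :=
  Submodule.liftQ _
    (LinearMap.prod
      (Submodule.mkQ _ ∘ₗ (LinearMap.lsmul R R d).restrict fun _ hr => dr_mem_annI hr)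
      (Submodule.mkQ _ ∘ₗ (LinearMap.lsmul R R c).restrict fun _ hr => cr_mem_annI hr)) <| by
    rintro ⟨r, hr⟩ ⟨-, f, hf, g, hg, hfd, hgc⟩
    refine Prod.ext ((Submodule.Quotient.mk_eq_zero _).2 ?_)
      ((Submodule.Quotient.mk_eq_zero _).2 ?_)
    · exact Ideal.mem_mul_span_singleton.2 ⟨f, hf, hfd.symm.trans (mul_comm r d)⟩
    · exact Ideal.mem_span_singleton_mul.2
        ⟨g, hg, (mul_comm c g).trans (hgc.symm.trans (mul_comm r c))⟩

/-- `[f] ↦ [f, 0]`. -/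
def fundBetaFst (c d : R) : Th R c d →ₗ[R] Hmod R c d :=
  Submodule.liftQ _
    (Submodule.mkQ _ ∘ₗ ((LinearMap.inl R R R ∘ₗ (annI R c).subtype).codRestrict (Zsub R c d)
      fun f => ann_pair_Z f.2 (zero_mem _))) <| by
    rintro ⟨f, hf⟩ hfd
    obtain ⟨z, hz, hzf⟩ := Ideal.mem_mul_span_singleton.1 hfd
    exact (Hmk_eq_zero_iff (ann_pair_Z hf (zero_mem _))).2 ⟨z, (mul_comm d z).trans hzf, hz⟩

/-- `[g] ↦ [0, g]`. -/
def fundBetaSnd (c d : R) : Tv R c d →ₗ[R] Hmod R c d :=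
  Submodule.liftQ _
    (Submodule.mkQ _ ∘ₗ ((LinearMap.inr R R R ∘ₗ (annI R d).subtype).codRestrict (Zsub R c d)
      fun g => ann_pair_Z (zero_mem _) g.2)) <| by
    rintro ⟨g, hg⟩ hgc
    obtain ⟨z, hz, hzg⟩ := Ideal.mem_span_singleton_mul.1 hgc
    exact (Hmk_eq_zero_iff (ann_pair_Z (zero_mem _) hg)).2 ⟨z, hz, hzg⟩

/-- `([f], [g]) ↦ [f, g]`. -/
def fundBeta (c d : R) : Th R c d × Tv R c d →ₗ[R] Hmod R c d :=
  (fundBetaFst c d).coprod (fundBetaSnd c d)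

/-- `[f, g] ↦ [c * f]`. -/
def fundGamma (c d : R) : Hmod R c d →ₗ[R] T4 R c d :=
  Submodule.liftQ _
    (Submodule.mkQ _ ∘ₗ (phiZ R c d).codRestrict (Ideal.span {c} ⊓ Ideal.span {d})
      fun p => cf_mem_inf p.2) <| by
    rintro ⟨p, hp⟩ ⟨r, rfl⟩
    exact (Submodule.Quotient.mk_eq_zero _).2
      (Ideal.mem_span_singleton.2 ⟨r, (mul_assoc c d r).symm⟩)

lemma fundAlpha_mk {c d r : R} (hr : r ∈ annI R (c * d)) :
    fundAlpha c d (Submodule.Quotient.mk ⟨r, hr⟩) =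
      (Submodule.Quotient.mk ⟨d * r, dr_mem_annI hr⟩,
       Submodule.Quotient.mk ⟨c * r, cr_mem_annI hr⟩) := rfl

lemma fundBeta_mk {c d f g : R} (hf : f ∈ annI R c) (hg : g ∈ annI R d) :
    fundBeta c d (Submodule.Quotient.mk ⟨f, hf⟩, Submodule.Quotient.mk ⟨g, hg⟩) =
      Hmk R c d f g (ann_pair_Z hf hg) := by
  change Hmk R c d f 0 (ann_pair_Z hf (zero_mem _)) +
    Hmk R c d 0 g (ann_pair_Z (zero_mem _) hg) = _
  exact congrArg Submodule.Quotient.mk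
    (Subtype.ext (Prod.ext (add_zero f) (zero_add g)))

lemma fundGamma_mk {c d f g : R} (h : c * f = d * g) :
    fundGamma c d (Hmk R c d f g h) = Submodule.Quotient.mk ⟨c * f, cf_mem_inf h⟩ := rfl

lemma fundAlpha_injective (c d : R) : Function.Injective (fundAlpha c d) := by
  rw [injective_iff_map_eq_zero]
  intro x hx
  obtain ⟨⟨r, hr⟩, rfl⟩ := Submodule.Quotient.mk_surjective _ x
  rw [fundAlpha_mk, Prod.mk_eq_zero, Submodule.Quotient.mk_eq_zero,
    Submodule.Quotient.mk_eq_zero] at hx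
  obtain ⟨f, hf, hfd⟩ := Ideal.mem_mul_span_singleton.1 hx.1
  obtain ⟨g, hg, hgc⟩ := Ideal.mem_span_singleton_mul.1 hx.2
  exact (Submodule.Quotient.mk_eq_zero _).2
    ⟨hr, f, hf, g, hg, (mul_comm r d).trans hfd.symm,
      (mul_comm r c).trans (hgc.symm.trans (mul_comm c g))⟩

lemma exact_fundAlpha_fundBeta (c d : R) : Function.Exact (fundAlpha c d) (fundBeta c d) := by
  rintro ⟨x, y⟩
  obtain ⟨⟨f, hf⟩, rfl⟩ := Submodule.Quotient.mk_surjective _ x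
  obtain ⟨⟨g, hg⟩, rfl⟩ := Submodule.Quotient.mk_surjective _ y
  rw [fundBeta_mk]
  constructor
  · intro h
    obtain ⟨r, rfl, rfl⟩ := (Hmk_eq_zero_iff _).1 h
    exact ⟨Submodule.Quotient.mk ⟨r, (mul_assoc c d r).trans hf⟩, rfl⟩
  · rintro ⟨z, hz⟩
    obtain ⟨⟨r, hr⟩, rfl⟩ := Submodule.Quotient.mk_surjective _ z
    rw [← fundBeta_mk hf hg, ← hz, fundAlpha_mk, fundBeta_mk, Hmk_eq_zero_iff]
    exact ⟨r, rfl, rfl⟩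

lemma exact_fundBeta_fundGamma (c d : R) : Function.Exact (fundBeta c d) (fundGamma c d) := by
  intro x
  constructor
  · obtain ⟨⟨⟨f, g⟩, h : c * f = d * g⟩, rfl⟩ := Submodule.Quotient.mk_surjective _ x
    intro hx
    obtain ⟨r, hr : c * f = c * d * r⟩ :=
      Ideal.mem_span_singleton.1 ((Submodule.Quotient.mk_eq_zero _).1 hx)
    have hf : f - d * r ∈ annI R c := by
      rw [mem_annI]
      linear_combination hr
    have hg : g - c * r ∈ annI R d := by
      rw [mem_annI]
      linear_combination hr - h
    refine ⟨(Submodule.Quotient.mk ⟨_, hf⟩, Submodule.Quotient.mk ⟨_, hg⟩), ?_⟩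
    rw [fundBeta_mk]
    refine (Submodule.Quotient.eq _).2 ⟨-r, ?_⟩
    simp
  · rintro ⟨⟨y, z⟩, rfl⟩
    obtain ⟨⟨f, hf⟩, rfl⟩ := Submodule.Quotient.mk_surjective _ y
    obtain ⟨⟨g, hg⟩, rfl⟩ := Submodule.Quotient.mk_surjective _ z
    rw [fundBeta_mk, fundGamma_mk, Submodule.Quotient.mk_eq_zero]
    simp [mem_annI.1 hf]

lemma fundGamma_surjective (c d : R) : Function.Surjective (fundGamma c d) := by
  intro x
  obtain ⟨⟨s, hs⟩, rfl⟩ := Submodule.Quotient.mk_surjective _ x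
  obtain ⟨f, rfl⟩ := Ideal.mem_span_singleton.1 hs.1
  obtain ⟨g, hg⟩ := Ideal.mem_span_singleton.1 hs.2
  exact ⟨Hmk R c d f g hg, rfl⟩

theorem stmt1 (c d : R) :
    ∃ (α : Tcd R c d →ₗ[R] Th R c d × Tv R c d)
      (β : Th R c d × Tv R c d →ₗ[R] Hmod R c d)
      (γ : Hmod R c d →ₗ[R] T4 R c d),
      (∀ (r : R) (hr : r ∈ annI R (c * d)),
        α (Submodule.Quotient.mk ⟨r, hr⟩) =
          (Submodule.Quotient.mk ⟨d * r, dr_mem_annI hr⟩,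
           Submodule.Quotient.mk ⟨c * r, cr_mem_annI hr⟩)) ∧
      (∀ (f g : R) (hf : f ∈ annI R c) (hg : g ∈ annI R d),
        β (Submodule.Quotient.mk ⟨f, hf⟩, Submodule.Quotient.mk ⟨g, hg⟩) =
          Hmk R c d f g (ann_pair_Z hf hg)) ∧
      (∀ (f g : R) (h : c * f = d * g),
        γ (Hmk R c d f g h) = Submodule.Quotient.mk ⟨c * f, cf_mem_inf h⟩) ∧
      Function.Injective α ∧ Function.Exact ⇑α ⇑β ∧ Function.Exact ⇑β ⇑γ ∧
      Function.Surjective γ := by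
  exact ⟨fundAlpha c d, fundBeta c d, fundGamma c d, fun _ => fundAlpha_mk,
    fun _ _ => fundBeta_mk, fun _ _ => fundGamma_mk, fundAlpha_injective c d,
    exact_fundAlpha_fundBeta c d, exact_fundBeta_fundGamma c d, fundGamma_surjective c d⟩
end

section
/- Let R be a commutative ring and c, d ∈ R. The image of the map β : (ann(c)/(ann(c)·(d))) ⊕ (ann(d)/((c)·ann(d))) → H, ([f], [g]) ↦ [f, g], equals the sum H_h + H_v of the submodules of H generated by horizontally pure and vertically pure classes. -/
open Submodule

variable {R : Type*} [CommRing R]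

/-- The map `ann(c) → H`, `f ↦ [f, 0]`. -/
def annToHorizontal (c d : R) : annI R c →ₗ[R] Hmod R c d :=
  Submodule.mkQ _ ∘ₗ
    (LinearMap.inl R R R ∘ₗ (annI R c).subtype).codRestrict (Zsub R c d)
      fun f => ann_pair_Z f.2 (zero_mem _)

/-- The map `ann(d) → H`, `g ↦ [0, g]`. -/
def annToVertical (c d : R) : annI R d →ₗ[R] Hmod R c d :=
  Submodule.mkQ _ ∘ₗ
    (LinearMap.inr R R R ∘ₗ (annI R d).subtype).codRestrict (Zsub R c d)
      fun g => ann_pair_Z (zero_mem _) g.2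

lemma range_annToHorizontal (c d : R) :
    LinearMap.range (annToHorizontal c d) = Hpureh R c d := by
  apply le_antisymm
  · rintro _ ⟨f, rfl⟩
    exact subset_span ⟨f, ann_pair_Z f.2 (zero_mem _), rfl⟩
  · refine span_le.mpr ?_
    rintro _ ⟨f, hf, rfl⟩
    exact ⟨⟨f, mem_annI.mpr (hf.trans (mul_zero d))⟩, rfl⟩

lemma range_annToVertical (c d : R) :
    LinearMap.range (annToVertical c d) = Hpurev R c d := by
  apply le_antisymm
  · rintro _ ⟨g, rfl⟩
    exact subset_span ⟨g, ann_pair_Z (zero_mem _) g.2, rfl⟩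
  · refine span_le.mpr ?_
    rintro _ ⟨g, hg, rfl⟩
    exact ⟨⟨g, mem_annI.mpr (hg.symm.trans (mul_zero c))⟩, rfl⟩

lemma comap_ann_mul_span_le_ker_annToHorizontal (c d : R) :
    Submodule.comap (annI R c).subtype (annI R c * Ideal.span {d}) ≤
      LinearMap.ker (annToHorizontal c d) := by
  rintro ⟨f, hf⟩ h
  obtain ⟨r, hr, rfl⟩ := Ideal.mem_mul_span_singleton.mp h
  exact (Submodule.Quotient.mk_eq_zero _).mpr ⟨r, Prod.ext (mul_comm d r) hr⟩

lemma comap_span_mul_ann_le_ker_annToVertical (c d : R) :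
    Submodule.comap (annI R d).subtype (Ideal.span {c} * annI R d) ≤
      LinearMap.ker (annToVertical c d) := by
  rintro ⟨g, hg⟩ h
  obtain ⟨r, hr, rfl⟩ := Ideal.mem_span_singleton_mul.mp h
  exact (Submodule.Quotient.mk_eq_zero _).mpr ⟨r, Prod.ext hr rfl⟩

theorem stmt2 (c d : R) :
    ∃ β : Th R c d × Tv R c d →ₗ[R] Hmod R c d,
      (∀ (f g : R) (hf : f ∈ annI R c) (hg : g ∈ annI R d),
        β (Submodule.Quotient.mk ⟨f, hf⟩, Submodule.Quotient.mk ⟨g, hg⟩) =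
          Hmk R c d f g (ann_pair_Z hf hg)) ∧
      LinearMap.range β = Hpureh R c d ⊔ Hpurev R c d := by
  refine ⟨LinearMap.coprod
    (Submodule.liftQ _ _ (comap_ann_mul_span_le_ker_annToHorizontal c d))
    (Submodule.liftQ _ _ (comap_span_mul_ann_le_ker_annToVertical c d)), ?_, ?_⟩
  · intro f g hf hg
    change Submodule.Quotient.mk (⟨(f, 0), _⟩ + ⟨(0, g), _⟩ : Zsub R c d) = _
    exact congrArg Submodule.Quotient.mk
      (Subtype.ext (Prod.ext (add_zero f) (zero_add g)))
  · rw [LinearMap.range_coprod, Submodule.range_liftQ, Submodule.range_liftQ,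
      range_annToHorizontal, range_annToVertical]
end

section
/- Let R be a commutative ring and c, d ∈ R. Then H = H_h + H_v if and only if (c) ∩ (d) = (c·d). -/
open Submodule

variable {R : Type*} [CommRing R]

/-- If `H` is generated by pure classes, then `c * f ∈ (c * d)` for every cycle `(f, g)`. -/
lemma mul_mem_span_mul_of_pure_sup_eq_top {c d f g : R}
    (htop : Hpureh R c d ⊔ Hpurev R c d = ⊤) (h : c * f = d * g) :
    c * f ∈ Ideal.span {c * d} := by
  let ψ : Hmod R c d →ₗ[R] R ⧸ Ideal.span {c * d} :=
    Submodule.liftQ _ ((Ideal.span {c * d}).mkQ ∘ₗ phiZ R c d) <| by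
      rintro ⟨⟨x, y⟩, hxy⟩ ⟨r, hr⟩
      have hx : d * r = x := congrArg Prod.fst hr
      refine (Submodule.Quotient.mk_eq_zero _).mpr (Ideal.mem_span_singleton.mpr ⟨r, ?_⟩)
      change c * x = c * d * r
      rw [← hx, mul_assoc]
  have hψ (x y : R) (hxy : c * x = d * y) :
      ψ (Hmk R c d x y hxy) = Submodule.Quotient.mk (c * x) := rfl
  have hker : Hpureh R c d ⊔ Hpurev R c d ≤ LinearMap.ker ψ := by
    refine sup_le (span_le.mpr ?_) (span_le.mpr ?_)
    · rintro _ ⟨x, hx, rfl⟩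
      rw [SetLike.mem_coe, LinearMap.mem_ker, hψ, hx, mul_zero, Submodule.Quotient.mk_zero]
    · rintro _ ⟨y, hy, rfl⟩
      rw [SetLike.mem_coe, LinearMap.mem_ker, hψ, mul_zero, Submodule.Quotient.mk_zero]
  have hmem : Hmk R c d f g h ∈ LinearMap.ker ψ := hker (htop ▸ mem_top)
  rwa [LinearMap.mem_ker, hψ, Submodule.Quotient.mk_eq_zero] at hmem

/-- A cycle `(f, g)` with `c * f ∈ (c * d)` is a sum of pure classes. -/
lemma Hmk_mem_pure_sup {c d f g : R} (h : c * f = d * g)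
    (hf : c * f ∈ Ideal.span {c * d}) :
    Hmk R c d f g h ∈ Hpureh R c d ⊔ Hpurev R c d := by
  obtain ⟨r, hr⟩ := Ideal.mem_span_singleton.mp hf
  have hh : c * (f - d * r) = d * 0 := by linear_combination hr
  have hv : c * 0 = d * (g - c * r) := by linear_combination h - hr
  have hsum : Hmk R c d f g h = Hmk R c d (f - d * r) 0 hh + Hmk R c d 0 (g - c * r) hv := by
    refine (Submodule.Quotient.eq _).mpr ⟨r, ?_⟩
    ext <;> simp
  rw [hsum]
  exact add_mem (mem_sup_left (subset_span ⟨_, hh, rfl⟩))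
    (mem_sup_right (subset_span ⟨_, hv, rfl⟩))

theorem stmt3 (c d : R) :
    Hpureh R c d ⊔ Hpurev R c d = ⊤ ↔
      Ideal.span {c} ⊓ Ideal.span {d} = Ideal.span {c * d} := by
  constructor
  · intro htop
    refine le_antisymm ?_ ?_
    · rintro x ⟨hxc, hxd⟩
      obtain ⟨f, rfl⟩ := Ideal.mem_span_singleton.mp hxc
      obtain ⟨g, hg⟩ := Ideal.mem_span_singleton.mp hxd
      exact mul_mem_span_mul_of_pure_sup_eq_top htop hg
    · exact le_inf (Ideal.span_singleton_le_span_singleton.mpr (dvd_mul_right c d))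
        (Ideal.span_singleton_le_span_singleton.mpr (dvd_mul_left d c))
  · intro hcd
    refine eq_top_iff'.mpr fun x => ?_
    obtain ⟨⟨⟨f, g⟩, h⟩, rfl⟩ := Submodule.Quotient.mk_surjective _ x
    exact Hmk_mem_pure_sup h (hcd ▸ cf_mem_inf h)
end

section
/- Let R be a finite product of fields, i.e. R = ∏_{i ∈ I} K_i for a finite index set I and fields K_i, and let c, d ∈ R. Then H is the internal direct sum of H_h and H_v, i.e. H_h + H_v = H and H_h ∩ H_v = 0. -/
open Submodule

variable {R : Type*} [CommRing R]

lemma Hmk_eq_Hmk_iff {c d f g f' g' : R} (h : c * f = d * g) (h' : c * f' = d * g') :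
    Hmk R c d f g h = Hmk R c d f' g' h' ↔ ∃ r, d * r = f - f' ∧ c * r = g - g' := by
  unfold Hmk
  rw [Submodule.Quotient.eq]
  simp [Bsub]

lemma Hmk_add_Hmk {c d f g f' g' : R} (h : c * f = d * g) (h' : c * f' = d * g') :
    Hmk R c d f g h + Hmk R c d f' g' h' =
      Hmk R c d (f + f') (g + g') (by rw [mul_add, mul_add, h, h']) := rfl

lemma smul_Hmk {c d f g : R} (a : R) (h : c * f = d * g) :
    a • Hmk R c d f g h =
      Hmk R c d (a * f) (a * g) (by rw [mul_left_comm, h, mul_left_comm]) := rfl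

lemma mem_Hpureh {c d : R} {x : Hmod R c d} :
    x ∈ Hpureh R c d ↔ ∃ f, ∃ hf : c * f = d * 0, x = Hmk R c d f 0 hf := by
  refine ⟨fun hx => ?_, fun hx => subset_span hx⟩
  induction hx using span_induction with
  | mem x hx => exact hx
  | zero => exact ⟨0, by simp, rfl⟩
  | add x y _ _ hx hy =>
    obtain ⟨f, hf, rfl⟩ := hx
    obtain ⟨f', hf', rfl⟩ := hy
    refine ⟨f + f', by rw [mul_add, hf, hf']; simp, ?_⟩
    simp [Hmk_add_Hmk]
  | smul a x _ hx =>
    obtain ⟨f, hf, rfl⟩ := hx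
    refine ⟨a * f, by rw [mul_left_comm, hf]; simp, ?_⟩
    simp [smul_Hmk]

lemma mem_Hpurev {c d : R} {x : Hmod R c d} :
    x ∈ Hpurev R c d ↔ ∃ g, ∃ hg : c * 0 = d * g, x = Hmk R c d 0 g hg := by
  refine ⟨fun hx => ?_, fun hx => subset_span hx⟩
  induction hx using span_induction with
  | mem x hx => exact hx
  | zero => exact ⟨0, by simp, rfl⟩
  | add x y _ _ hx hy =>
    obtain ⟨g, hg, rfl⟩ := hx
    obtain ⟨g', hg', rfl⟩ := hy
    refine ⟨g + g', by rw [mul_add, ← hg, ← hg']; simp, ?_⟩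
    simp [Hmk_add_Hmk]
  | smul a x _ hx =>
    obtain ⟨g, hg, rfl⟩ := hx
    refine ⟨a * g, by rw [mul_left_comm, ← hg]; simp, ?_⟩
    simp [smul_Hmk]

/-- If `c` and `d` are von Neumann regular, every class is a sum of a horizontally and a
vertically pure one. -/
lemma Hpureh_sup_Hpurev_eq_top {c d c' d' : R} (hc : c * c' * c = c) (hd : d * d' * d = d) :
    Hpureh R c d ⊔ Hpurev R c d = ⊤ := by
  refine eq_top_iff.mpr fun x _ => ?_
  obtain ⟨⟨⟨f, g⟩, h⟩, rfl⟩ := Submodule.Quotient.mk_surjective _ x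
  replace h : c * f = d * g := h
  have hf : c * (f - d * (f * d' * (c * c'))) = d * 0 := by
    linear_combination (1 - d * d') * h - f * d * d' * hc - g * hd
  have hg : c * 0 = d * (g - c * (f * d' * (c * c'))) := by
    linear_combination -hf + h
  refine mem_sup.mpr ⟨_, mem_Hpureh.mpr ⟨_, hf, rfl⟩, _, mem_Hpurev.mpr ⟨_, hg, rfl⟩, ?_⟩
  simp only [Hmk_add_Hmk, add_zero, zero_add]
  exact (Hmk_eq_Hmk_iff _ h).mpr ⟨-(f * d' * (c * c')), by ring, by ring⟩

/-- If `c` is von Neumann regular, only the zero class is both horizontally and vertically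
pure. -/
lemma Hpureh_inf_Hpurev_eq_bot {c d c' : R} (hc : c * c' * c = c) :
    Hpureh R c d ⊓ Hpurev R c d = ⊥ := by
  refine eq_bot_iff.mpr fun x hx => ?_
  obtain ⟨f, hf, rfl⟩ := mem_Hpureh.mp hx.1
  obtain ⟨g, hg, hfg⟩ := mem_Hpurev.mp hx.2
  obtain ⟨r, hr, -⟩ := (Hmk_eq_Hmk_iff hf hg).mp hfg
  refine (mem_bot R).mpr ((Hmk_eq_Hmk_iff hf (by simp : c * 0 = d * 0)).mpr
    ⟨r * (1 - c * c'), ?_, ?_⟩)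
  · linear_combination (1 - c * c') * hr - c' * hf
  · linear_combination -r * hc

theorem stmt6 {ι : Type*} [Fintype ι] (K : ι → Type*) [∀ i, Field (K i)]
    (c d : ∀ i, K i) :
    Hpureh (∀ i, K i) c d ⊔ Hpurev (∀ i, K i) c d = ⊤ ∧
    Hpureh (∀ i, K i) c d ⊓ Hpurev (∀ i, K i) c d = ⊥ := by
  have regular (a : ∀ i, K i) : a * a⁻¹ * a = a := funext fun i => mul_inv_mul_cancel (a i)
  exact ⟨Hpureh_sup_Hpurev_eq_top (regular c) (regular d), Hpureh_inf_Hpurev_eq_bot (regular c)⟩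
end

section
/- Let R be a commutative ring and c, d ∈ R. The map μ_c : ann(c·d)/M → ((c) ∩ ann(d))/((c)·ann(d)) sending the class of r to the class of r·c is a well-defined isomorphism of R-modules, and likewise the map μ_d : ann(c·d)/M → (ann(c) ∩ (d))/(ann(c)·(d)) sending the class of r to the class of r·d is a well-defined isomorphism of R-modules. -/
open Submodule

variable {R : Type*} [CommRing R]

lemma exists_quotientEquiv_of_surjective {A B : Type*} [AddCommGroup A] [Module R A]
    [AddCommGroup B] [Module R B] {p : Submodule R A} {q : Submodule R B} (f : A →ₗ[R] B)
    (hf : Function.Surjective f) (hpq : p = q.comap f) :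
    ∃ e : (A ⧸ p) ≃ₗ[R] (B ⧸ q), ∀ a : A,
      e (Submodule.Quotient.mk a) = Submodule.Quotient.mk (f a) := by
  refine ⟨LinearEquiv.ofBijective (p.mapQ q f hpq.le) ⟨?_, ?_⟩, fun a => rfl⟩
  · rw [← LinearMap.ker_eq_bot, Submodule.ker_mapQ, ← hpq, Submodule.mkQ_map_self]
  · intro b
    obtain ⟨b, rfl⟩ := Submodule.Quotient.mk_surjective q b
    obtain ⟨a, rfl⟩ := hf b
    exact ⟨Submodule.Quotient.mk a, rfl⟩

lemma mem_Msub_iff_mul_mem_span_mul_annI {c d r : R} (hr : r ∈ annI R (c * d)) :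
    r ∈ Msub R c d ↔ r * c ∈ Ideal.span {c} * annI R d := by
  rw [mem_Msub, Ideal.mem_span_singleton_mul]
  constructor
  · rintro ⟨-, f, -, g, hg, -, h⟩
    exact ⟨g, hg, by rw [h, mul_comm]⟩
  · rintro ⟨g, hg, h⟩
    rw [mem_annI] at hg
    refine ⟨hr, r - g, ?_, g, hg, ?_, ?_⟩
    · rw [mem_annI]
      linear_combination -h
    · linear_combination hg
    · linear_combination -h

lemma Msub_comm (c d : R) : Msub R c d = Msub R d c := by
  ext r
  simp only [mem_Msub, mul_comm c d]
  constructor <;> rintro ⟨hr, f, hf, g, hg, h, h'⟩ <;> exact ⟨hr, g, hg, f, hf, h', h⟩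

lemma mem_Msub_iff_mul_mem_annI_mul_span {c d r : R} (hr : r ∈ annI R (c * d)) :
    r ∈ Msub R c d ↔ r * d ∈ annI R c * Ideal.span {d} := by
  rw [Msub_comm, mul_comm (annI R c)]
  exact mem_Msub_iff_mul_mem_span_mul_annI (mul_comm c d ▸ hr)

theorem stmt8 (c d : R) :
    (∃ e : Tcd R c d ≃ₗ[R] Tc' R c d,
      ∀ (r : R) (hr : r ∈ annI R (c * d)),
        e (Submodule.Quotient.mk ⟨r, hr⟩) =
          Submodule.Quotient.mk ⟨r * c, rc_mem_inf_ann hr⟩) ∧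
    (∃ e : Tcd R c d ≃ₗ[R] Td' R c d,
      ∀ (r : R) (hr : r ∈ annI R (c * d)),
        e (Submodule.Quotient.mk ⟨r, hr⟩) =
          Submodule.Quotient.mk ⟨r * d, rd_mem_ann_inf hr⟩) := by
  constructor
  · let f : annI R (c * d) →ₗ[R] ↥(Ideal.span {c} ⊓ annI R d) :=
      (LinearMap.mulRight R c).restrict fun _ hr => rc_mem_inf_ann hr
    have hf : Function.Surjective f := by
      rintro ⟨x, hx, hxd⟩
      obtain ⟨r, rfl⟩ := Ideal.mem_span_singleton.mp hx
      rw [SetLike.mem_coe, mem_annI] at hxd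
      exact ⟨⟨r, mem_annI.mpr (by linear_combination hxd)⟩, Subtype.ext (mul_comm r c)⟩
    exact (exists_quotientEquiv_of_surjective f hf
      (Submodule.ext fun r => mem_Msub_iff_mul_mem_span_mul_annI r.2)).imp
        fun e he r hr => he ⟨r, hr⟩
  · let f : annI R (c * d) →ₗ[R] ↥(annI R c ⊓ Ideal.span {d}) :=
      (LinearMap.mulRight R d).restrict fun _ hr => rd_mem_ann_inf hr
    have hf : Function.Surjective f := by
      rintro ⟨x, hxc, hx⟩
      obtain ⟨r, rfl⟩ := Ideal.mem_span_singleton.mp hx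
      rw [SetLike.mem_coe, mem_annI] at hxc
      exact ⟨⟨r, mem_annI.mpr (by linear_combination hxc)⟩, Subtype.ext (mul_comm r d)⟩
    exact (exists_quotientEquiv_of_surjective f hf
      (Submodule.ext fun r => mem_Msub_iff_mul_mem_annI_mul_span r.2)).imp
        fun e he r hr => he ⟨r, hr⟩
end

section
/- Let R be a finite product of fields, i.e. R = ∏_{i ∈ I} K_i for a finite index set I and fields K_i, and let c, d ∈ R. Then the ideals ann(c) and ann(d) are principal, say ann(c) = (P) and ann(d) = (Q), and the map R/(c, d) ⊕ R/(c, d) → H sending ([f], [g]) to [f·P, g·Q] is a well-defined R-module isomorphism. -/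
open Submodule

section PseudoInverse
variable {R : Type*} [CommRing R]

/-- If `c * c' * c = c`, then `ann(c)` is generated by the idempotent `1 - c * c'`. -/
lemma annI_eq_span_one_sub {c c' : R} (hc : c * c' * c = c) :
    annI R c = Ideal.span {1 - c * c'} := by
  ext r
  rw [mem_annI, Ideal.mem_span_singleton]
  constructor
  · intro h
    exact ⟨r, by linear_combination c' * h⟩
  · rintro ⟨s, rfl⟩
    linear_combination -s * hc

/-- The linear map `R/(c, d) × R/(c, d) → H`, `([f], [g]) ↦ [f * P, g * Q]`, for `P ∈ ann(c)` and
`Q ∈ ann(d)`. -/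
def quotProdToHmod {c d P Q : R} (hP : c * P = 0) (hQ : d * Q = 0) :
    ((R ⧸ Ideal.span {c, d}) × (R ⧸ Ideal.span {c, d})) →ₗ[R] Hmod R c d :=
  LinearMap.coprod
    (Submodule.liftQ _ (LinearMap.toSpanSingleton R _ (Hmk R c d P 0 (by simp [hP]))) <| by
      refine Submodule.span_le.mpr ?_
      rintro x (rfl | rfl)
      · exact (Hmk_eq_Hmk_iff (f := x * P) (g := x * 0) (f' := 0) (g' := 0)
          (by simp [hP]) (by simp)).mpr ⟨0, by simp [hP]⟩
      · exact (Hmk_eq_Hmk_iff (f := x * P) (g := x * 0) (f' := 0) (g' := 0)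
          (by linear_combination x * hP) (by simp)).mpr ⟨P, by simp [hP]⟩)
    (Submodule.liftQ _ (LinearMap.toSpanSingleton R _ (Hmk R c d 0 Q (by simp [hQ]))) <| by
      refine Submodule.span_le.mpr ?_
      rintro x (rfl | rfl)
      · exact (Hmk_eq_Hmk_iff (f := x * 0) (g := x * Q) (f' := 0) (g' := 0)
          (by linear_combination -x * hQ) (by simp)).mpr ⟨Q, by simp [hQ]⟩
      · exact (Hmk_eq_Hmk_iff (f := x * 0) (g := x * Q) (f' := 0) (g' := 0)
          (by simp [hQ]) (by simp)).mpr ⟨0, by simp [hQ]⟩)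

lemma quotProdToHmod_mk {c d P Q : R} (hP : c * P = 0) (hQ : d * Q = 0) (f g : R)
    (h : c * (f * P) = d * (g * Q)) :
    quotProdToHmod hP hQ (Ideal.Quotient.mk (Ideal.span {c, d}) f,
      Ideal.Quotient.mk (Ideal.span {c, d}) g) = Hmk R c d (f * P) (g * Q) h :=
  (Hmk_eq_Hmk_iff (f := f * P + g * 0) (g := f * 0 + g * Q)
    (by linear_combination h) h).mpr ⟨0, by simp⟩

lemma quotProdToHmod_bijective {c d c' d' P Q : R} (hc : c * c' * c = c) (hd : d * d' * d = d)
    (hP : c * P = 0) (hQ : d * Q = 0) (hP' : P = 1 - c * c') (hQ' : Q = 1 - d * d') :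
    Function.Bijective (quotProdToHmod hP hQ) := by
  have hZ (f g : R) : c * (f * P) = d * (g * Q) := by
    linear_combination f * hP - g * hQ
  constructor
  · rw [injective_iff_map_eq_zero]
    rintro ⟨x, y⟩ hxy
    obtain ⟨f, rfl⟩ := Ideal.Quotient.mk_surjective x
    obtain ⟨g, rfl⟩ := Ideal.Quotient.mk_surjective y
    rw [quotProdToHmod_mk hP hQ f g (hZ f g)] at hxy
    obtain ⟨r, hr, hr'⟩ := (Hmk_eq_Hmk_iff (f' := 0) (g' := 0) (hZ f g) (by simp)).mp hxy
    refine Prod.ext (Ideal.Quotient.eq_zero_iff_mem.mpr (Ideal.mem_span_pair.mpr ?_))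
      (Ideal.Quotient.eq_zero_iff_mem.mpr (Ideal.mem_span_pair.mpr ?_))
    · exact ⟨f * c', r, by linear_combination hr + f * hP'⟩
    · exact ⟨r, g * d', by linear_combination hr' + g * hQ'⟩
  · intro z
    obtain ⟨⟨⟨f, g⟩, h⟩, rfl⟩ := Submodule.Quotient.mk_surjective _ z
    rw [mem_Zsub] at h
    refine ⟨(Ideal.Quotient.mk _ f, Ideal.Quotient.mk _ g), ?_⟩
    rw [quotProdToHmod_mk hP hQ f g (hZ f g)]
    refine (Hmk_eq_Hmk_iff (hZ f g) h).mpr ⟨-(g * c' * d * d'), ?_, ?_⟩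
    · linear_combination -g * c' * hd - f * hP' + c' * h
    · linear_combination c * c' * d' * h - d' * f * hc - g * hQ' - d' * h

end PseudoInverse

variable {R : Type*} [CommRing R]

theorem stmt10 {ι : Type*} [Fintype ι] (K : ι → Type*) [∀ i, Field (K i)]
    (c d : ∀ i, K i) :
    ∃ P Q : ∀ i, K i,
      ∃ (hP : annI (∀ i, K i) c = Ideal.span {P})
        (hQ : annI (∀ i, K i) d = Ideal.span {Q}),
      ∃ φ : ((∀ i, K i) ⧸ Ideal.span {c, d}) × ((∀ i, K i) ⧸ Ideal.span {c, d})
          →ₗ[∀ i, K i] Hmod (∀ i, K i) c d,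
        (∀ f g : ∀ i, K i,
          φ (Ideal.Quotient.mk (Ideal.span {c, d}) f,
             Ideal.Quotient.mk (Ideal.span {c, d}) g) =
            Hmk (∀ i, K i) c d (f * P) (g * Q) (HmkPQ hP hQ f g)) ∧
        Function.Bijective φ := by
  have hinv (a : ∀ i, K i) : a * a⁻¹ * a = a := funext fun i => mul_inv_mul_cancel (a i)
  have hann (a : ∀ i, K i) : a * (1 - a * a⁻¹) = 0 := by linear_combination -hinv a
  exact ⟨1 - c * c⁻¹, 1 - d * d⁻¹, annI_eq_span_one_sub (hinv c), annI_eq_span_one_sub (hinv d),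
    quotProdToHmod (hann c) (hann d), fun f g => quotProdToHmod_mk _ _ f g _,
    quotProdToHmod_bijective (hinv c) (hinv d) _ _ rfl rfl⟩
end

section
/- Let ℓ, m be positive integers and R = F₂[x, y]/(xˡ − 1, yᵐ − 1). Let c ∈ R be the image of a univariate polynomial c(x) ∈ F₂[x] and let d ∈ R be the image of a univariate polynomial d(y) ∈ F₂[y]. Then (c) ∩ (d) = (c·d) in R; equivalently, the associated module H satisfies H = H_h + H_v (the code C(c,d) is pure). -/
open Submodule

/-- The ring `F₂[x, y]/(xˡ − 1, yᵐ − 1)` underlying bivariate bicycle codes. -/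
abbrev BBRing (l m : ℕ) : Type :=
  MvPolynomial (Fin 2) (ZMod 2) ⧸
    Ideal.span {(MvPolynomial.X 0 : MvPolynomial (Fin 2) (ZMod 2)) ^ l - 1,
      (MvPolynomial.X 1 : MvPolynomial (Fin 2) (ZMod 2)) ^ m - 1}

/-- The ideal `(xˡ − 1, yᵐ − 1)`. -/
noncomputable abbrev BBIdeal (l m : ℕ) : Ideal (MvPolynomial (Fin 2) (ZMod 2)) :=
  Ideal.span {(MvPolynomial.X 0 : MvPolynomial (Fin 2) (ZMod 2)) ^ l - 1,
    (MvPolynomial.X 1 : MvPolynomial (Fin 2) (ZMod 2)) ^ m - 1}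

section PolynomialIdeals

/-- A ring hom killing `q` sends `p` and `gcd p q` to generators of the same ideal. -/
lemma span_map_gcd_eq {E R : Type*} [EuclideanDomain E] [DecidableEq E] [CommRing R]
    (ψ : E →+* R) {p q : E} (hq : ψ q = 0) :
    Ideal.span {ψ (EuclideanDomain.gcd p q)} = Ideal.span {ψ p} := by
  apply le_antisymm <;> rw [Ideal.span_singleton_le_span_singleton]
  · rw [EuclideanDomain.gcd_eq_gcd_ab p q, map_add, map_mul, map_mul, hq, zero_mul, add_zero]
    exact dvd_mul_right _ _
  · exact map_dvd ψ (EuclideanDomain.gcd_dvd_left p q)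

lemma degreeOf_eq_zero_of_dvd_aeval_X {k σ : Type*} [Field k] {i j : σ} (hij : j ≠ i)
    {p : Polynomial k} {u : MvPolynomial σ k}
    (hp : Polynomial.aeval (MvPolynomial.X i : MvPolynomial σ k) p ≠ 0)
    (hu : u ∣ Polynomial.aeval (MvPolynomial.X i : MvPolynomial σ k) p) :
    u.degreeOf j = 0 := by
  have hmem : Polynomial.aeval (MvPolynomial.X i : MvPolynomial σ k) p ∈
      MvPolynomial.supported k {i} := by
    rw [MvPolynomial.supported_eq_adjoin_X, Set.image_singleton]
    exact Polynomial.aeval_mem_adjoin_singleton k _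
  have hdeg : (Polynomial.aeval (MvPolynomial.X i : MvPolynomial σ k) p).degreeOf j = 0 := by
    by_contra h
    exact hij (MvPolynomial.mem_supported.mp hmem (MvPolynomial.mem_vars_iff_degreeOf_ne_zero.mpr h))
  obtain ⟨v, hv⟩ := hu
  rw [hv] at hp hdeg
  rw [MvPolynomial.degreeOf_mul_eq (left_ne_zero_of_mul hp) (right_ne_zero_of_mul hp)] at hdeg
  omega

lemma aeval_X_ne_zero {k σ : Type*} [Field k] (i : σ) {p : Polynomial k} (hp : p ≠ 0) :
    Polynomial.aeval (MvPolynomial.X i : MvPolynomial σ k) p ≠ 0 :=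
  fun h ↦ hp (transcendental_iff.mp (MvPolynomial.transcendental_X k i) p h)

/-- Nonzero univariate polynomials in distinct variables have no common factor. -/
lemma isRelPrime_aeval_X {k σ : Type*} [Field k] {i j : σ} (hij : i ≠ j)
    {p r : Polynomial k} (hp : p ≠ 0) (hr : r ≠ 0) :
    IsRelPrime (Polynomial.aeval (MvPolynomial.X i : MvPolynomial σ k) p)
      (Polynomial.aeval (MvPolynomial.X j : MvPolynomial σ k) r) := by
  intro u hup hur
  have hvars : u.vars = ∅ := by
    refine Finset.eq_empty_of_forall_notMem fun n hn ↦ ?_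
    rw [MvPolynomial.mem_vars_iff_degreeOf_ne_zero] at hn
    by_cases hni : n = i
    · exact hn (degreeOf_eq_zero_of_dvd_aeval_X (hni.trans_ne hij) (aeval_X_ne_zero j hr) hur)
    · exact hn (degreeOf_eq_zero_of_dvd_aeval_X hni (aeval_X_ne_zero i hp) hup)
  have hu : u ≠ 0 := ne_zero_of_dvd_ne_zero (aeval_X_ne_zero i hp) hup
  rw [MvPolynomial.vars_eq_empty_iff_eq_C] at hvars
  rw [hvars] at hu ⊢
  exact (IsUnit.mk0 _ fun h ↦ hu (by rw [h, map_zero])).map MvPolynomial.C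

/-- If `p` and `r` are relatively prime, then `(p) ∩ (r) = (p * r)` holds modulo
`(P, Q)` for any multiples `P` of `p` and `Q` of `r`. -/
lemma span_inf_span_mk_eq {S : Type*} [CommRing S] [DecompositionMonoid S] {p r P Q : S}
    (hpr : IsRelPrime p r) (hP : p ∣ P) (hQ : r ∣ Q) :
    Ideal.span {Ideal.Quotient.mk (Ideal.span {P, Q}) p} ⊓
        Ideal.span {Ideal.Quotient.mk (Ideal.span {P, Q}) r} =
      Ideal.span {Ideal.Quotient.mk (Ideal.span {P, Q}) p *
        Ideal.Quotient.mk (Ideal.span {P, Q}) r} := by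
  apply le_antisymm
  · rintro e ⟨he₁, he₂⟩
    obtain ⟨f, rfl⟩ := Ideal.mem_span_singleton.mp he₁
    obtain ⟨g, hg⟩ := Ideal.mem_span_singleton.mp he₂
    obtain ⟨f, rfl⟩ := Ideal.Quotient.mk_surjective f
    obtain ⟨g, rfl⟩ := Ideal.Quotient.mk_surjective g
    rw [← map_mul, ← map_mul, Ideal.Quotient.eq, Ideal.mem_span_pair] at hg
    obtain ⟨a, b, hab⟩ := hg
    obtain ⟨q, rfl⟩ := hP
    obtain ⟨s, rfl⟩ := hQ
    have hdvd : p ∣ r * (g + s * b) := ⟨f - q * a, by linear_combination hab⟩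
    obtain ⟨h, hh⟩ := hpr.dvd_of_dvd_mul_left hdvd
    refine Ideal.mem_span_singleton.mpr ⟨Ideal.Quotient.mk _ h, ?_⟩
    rw [← map_mul, ← map_mul, ← map_mul, Ideal.Quotient.eq, Ideal.mem_span_pair]
    exact ⟨a, 0, by linear_combination hab - r * hh⟩
  · rw [← Ideal.span_singleton_mul_span_singleton]
    exact Ideal.mul_le_inf

end PolynomialIdeals

/-- If `(c) ∩ (d) = (c * d)`, then every class is a sum of pure classes. -/
lemma Hpureh_sup_Hpurev_eq_top_s14 {R : Type*} [CommRing R] {c d : R}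
    (h : Ideal.span {c} ⊓ Ideal.span {d} = Ideal.span {c * d}) :
    Hpureh R c d ⊔ Hpurev R c d = ⊤ := by
  rw [eq_top_iff]
  rintro x -
  obtain ⟨⟨⟨f, g⟩, hfg⟩, rfl⟩ := Submodule.Quotient.mk_surjective _ x
  replace hfg : c * f = d * g := hfg
  have hmem := cf_mem_inf hfg
  rw [h] at hmem
  obtain ⟨r, hr⟩ := Ideal.mem_span_singleton.mp hmem
  have hf : c * (f - d * r) = d * 0 := by linear_combination hr
  have hg : c * 0 = d * (g - c * r) := by linear_combination hfg - hr
  refine Submodule.mem_sup.mpr ⟨Hmk R c d _ 0 hf, subset_span ⟨_, hf, rfl⟩,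
    Hmk R c d 0 _ hg, subset_span ⟨_, hg, rfl⟩, ?_⟩
  symm
  rw [Hmk, Hmk, ← Submodule.Quotient.mk_add, Submodule.Quotient.eq]
  exact ⟨r, by ext <;> simp⟩

/-- If `c` is the image of a univariate polynomial in `x` and `d` the image of a
univariate polynomial in `y`, then `(c) ∩ (d) = (c·d)`; equivalently,
`H = H_h + H_v`, i.e. the code `C(c, d)` is pure. -/
theorem stmt14 (l m : ℕ) (hl : 0 < l) (hm : 0 < m)
    (pc pd : Polynomial (ZMod 2)) (c d : BBRing l m)
    (hc : c = Ideal.Quotient.mk (BBIdeal l m)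
      (Polynomial.aeval (MvPolynomial.X 0 : MvPolynomial (Fin 2) (ZMod 2)) pc))
    (hd : d = Ideal.Quotient.mk (BBIdeal l m)
      (Polynomial.aeval (MvPolynomial.X 1 : MvPolynomial (Fin 2) (ZMod 2)) pd)) :
    Ideal.span {c} ⊓ Ideal.span {d} = Ideal.span {c * d} ∧
    Hpureh (BBRing l m) c d ⊔ Hpurev (BBRing l m) c d = ⊤ := by
  classical
  have key : Ideal.span {c} ⊓ Ideal.span {d} = Ideal.span {c * d} := by
    have hl₀ : (Polynomial.X ^ l - 1 : Polynomial (ZMod 2)) ≠ 0 :=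
      (Polynomial.monic_X_pow_sub_C 1 hl.ne').ne_zero
    have hm₀ : (Polynomial.X ^ m - 1 : Polynomial (ZMod 2)) ≠ 0 :=
      (Polynomial.monic_X_pow_sub_C 1 hm.ne').ne_zero
    have hx : Polynomial.aeval (MvPolynomial.X 0 : MvPolynomial (Fin 2) (ZMod 2))
        (Polynomial.X ^ l - 1 : Polynomial (ZMod 2)) = MvPolynomial.X 0 ^ l - 1 := by simp
    have hy : Polynomial.aeval (MvPolynomial.X 1 : MvPolynomial (Fin 2) (ZMod 2))
        (Polynomial.X ^ m - 1 : Polynomial (ZMod 2)) = MvPolynomial.X 1 ^ m - 1 := by simp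
    have hspan_c := span_map_gcd_eq (p := pc) (q := Polynomial.X ^ l - 1)
      ((Ideal.Quotient.mk (BBIdeal l m)).comp (Polynomial.aeval (MvPolynomial.X 0)).toRingHom)
      (Ideal.Quotient.eq_zero_iff_mem.mpr (hx ▸ Ideal.subset_span (Set.mem_insert _ _)))
    have hspan_d := span_map_gcd_eq (p := pd) (q := Polynomial.X ^ m - 1)
      ((Ideal.Quotient.mk (BBIdeal l m)).comp (Polynomial.aeval (MvPolynomial.X 1)).toRingHom)
      (Ideal.Quotient.eq_zero_iff_mem.mpr
        (hy ▸ Ideal.subset_span (Set.mem_insert_of_mem _ rfl)))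
    have hinf := span_inf_span_mk_eq
      (isRelPrime_aeval_X (σ := Fin 2) zero_ne_one
        (fun h ↦ hl₀ (EuclideanDomain.gcd_eq_zero_iff.mp h).2 :
          EuclideanDomain.gcd pc (Polynomial.X ^ l - 1) ≠ 0)
        (fun h ↦ hm₀ (EuclideanDomain.gcd_eq_zero_iff.mp h).2 :
          EuclideanDomain.gcd pd (Polynomial.X ^ m - 1) ≠ 0))
      (hx ▸ map_dvd _ (EuclideanDomain.gcd_dvd_right _ _))
      (hy ▸ map_dvd _ (EuclideanDomain.gcd_dvd_right _ _))
    rw [hc, hd, ← Ideal.span_singleton_mul_span_singleton]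
    rw [← Ideal.span_singleton_mul_span_singleton] at hinf
    simp only [RingHom.comp_apply, AlgHom.toRingHom_eq_coe, RingHom.coe_coe] at hspan_c hspan_d
    rwa [hspan_c, hspan_d] at hinf
  exact ⟨key, Hpureh_sup_Hpurev_eq_top_s14 key⟩
end
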